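/- Let k = 2d with d ≥ 1 and π ∈ S_k with ν(π) > 2. Let j = π(1) and let j' be the unique element of [k] congruent to j − o_j modulo k. If j is not free but j' is free, then there exists τ ∈ S_k with d_{P_k}(π, τ) ≤ 3 and ν(π) − ν(τ) ≥ 3. -/

import Mathlib

/-- `π` and `τ` are related by a prefix reversal: there is `t ≤ k` such that the first `t`
entries are reversed and the remaining entries agree (0-indexed form of the paper's
1-indexed definition). -/
def PrefixRev (k : ℕ) (π τ : Equiv.Perm (Fin k)) : Prop :=
  ∃ t : ℕ, ∃ ht : t ≤ k,
    (∀ i : Fin k, t ≤ (i : ℕ) → π i = τ i) ∧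
    (∀ i : Fin k, ∀ hi : (i : ℕ) < t, π i = τ ⟨t - 1 - (i : ℕ), by omega⟩)

/-- `π` and `τ` are related by a suffix reversal: there is `t` such that the entries at
positions `< t` agree and the remaining entries are reversed. -/
def SuffixRev (k : ℕ) (π τ : Equiv.Perm (Fin k)) : Prop :=
  ∃ t : ℕ,
    (∀ i : Fin k, (i : ℕ) < t → π i = τ i) ∧
    (∀ i : Fin k, ∀ hi : t ≤ (i : ℕ), π i = τ ⟨k - 1 - (i : ℕ) + t, by
      have := i.isLt; omega⟩)

/-- The pancake graph `P_k`, whose edges are prefix reversals. -/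
def pancakeGraph (k : ℕ) : SimpleGraph (Equiv.Perm (Fin k)) :=
  SimpleGraph.fromRel (PrefixRev k)

/-- The graph `G_k`, whose edges are prefix and suffix reversals. -/
def prefixSuffixGraph (k : ℕ) : SimpleGraph (Equiv.Perm (Fin k)) :=
  SimpleGraph.fromRel (fun π τ => PrefixRev k π τ ∨ SuffixRev k π τ)

/-- The values of `π` at positions `p` and `q` differ by `1`, or are `{1, k}`
(1-indexed), i.e. `{0, k - 1}` in this 0-indexed formalization. -/
def PiAdjacency (k : ℕ) (π : Equiv.Perm (Fin k)) (p q : Fin k) : Prop :=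
  (((π p : ℕ) : ℤ) - ((π q : ℕ) : ℤ)).natAbs = 1 ∨
    ({(π p : ℕ), (π q : ℕ)} : Set ℕ) = {0, k - 1}

/-- Positions `i` and `i + 1` (0-indexed) form a `π`-adjacency. -/
def PosAdjacency (k : ℕ) (π : Equiv.Perm (Fin k)) (i : ℕ) : Prop :=
  ∃ h : i + 1 < k, PiAdjacency k π ⟨i, by omega⟩ ⟨i + 1, h⟩

/-- The equivalence relation `∼_π`: `a ∼_π b` iff every pair of consecutive positions
between the position of `a` and the position of `b` is a `π`-adjacency. -/
def Sim (k : ℕ) (π : Equiv.Perm (Fin k)) (a b : Fin k) : Prop :=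
  ∀ i : ℕ, min ((π.symm a : ℕ)) ((π.symm b : ℕ)) ≤ i →
    i < max ((π.symm a : ℕ)) ((π.symm b : ℕ)) → PosAdjacency k π i

/-- `∼_π` has exactly one equivalence class on `[k]`. -/
def OneClass (k : ℕ) (π : Equiv.Perm (Fin k)) : Prop :=
  ∀ a b : Fin k, Sim k π a b

/-- The pairing `φ(j) = j + o_j`, swapping `2i - 1 ↔ 2i` (1-indexed),
i.e. `2i ↔ 2i + 1` (0-indexed). -/
def partner (d : ℕ) (j : Fin (2 * d)) : Fin (2 * d) :=
  ⟨if (j : ℕ) % 2 = 0 then (j : ℕ) + 1 else (j : ℕ) - 1, by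
    have := j.isLt; split <;> omega⟩

/-- The equivalence relation `≈_π`. -/
def ApproxSim (d : ℕ) (π : Equiv.Perm (Fin (2 * d))) (a b : Fin (2 * d)) : Prop :=
  a = b ∨ (Sim (2 * d) π a b ∧ Sim (2 * d) π a (partner d a) ∧
    Sim (2 * d) π b (partner d b))

/-- `j` is free, i.e. `{j}` is an equivalence class (a singleton) of `≈_π`. -/
def IsFree (d : ℕ) (π : Equiv.Perm (Fin (2 * d))) (j : Fin (2 * d)) : Prop :=
  ∀ j' : Fin (2 * d), ApproxSim d π j j' → j' = j

/-- The `≈_π`-equivalence class of `j`, as a finite set. -/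
noncomputable def classOf (d : ℕ) (π : Equiv.Perm (Fin (2 * d))) (j : Fin (2 * d)) :
    Finset (Fin (2 * d)) :=
  @Finset.filter _ (fun j' => ApproxSim d π j j') (Classical.decPred _) Finset.univ

/-- `S(π)`, the number of singletons of `π`. -/
noncomputable def numSingletons (d : ℕ) (π : Equiv.Perm (Fin (2 * d))) : ℕ :=
  (@Finset.filter _ (fun j => IsFree d π j) (Classical.decPred _) Finset.univ).card

/-- `B(π)`, the number of blocks (equivalence classes of `≈_π` of size `> 1`) of `π`. -/
noncomputable def numBlocks (d : ℕ) (π : Equiv.Perm (Fin (2 * d))) : ℕ :=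
  ((Finset.univ.image (classOf d π)).filter (fun C => 1 < C.card)).card

/-- The potential function `ν(π) = (3/2) S(π) + 2 B(π)`. -/
noncomputable def nu (d : ℕ) (π : Equiv.Perm (Fin (2 * d))) : ℚ :=
  3 / 2 * (numSingletons d π : ℚ) + 2 * (numBlocks d π : ℚ)

/-- The unique element of `[k]` congruent to `j - o_j` modulo `k` (0-indexed form). -/
def prevVal (d : ℕ) (j : Fin (2 * d)) : Fin (2 * d) :=
  ⟨if (j : ℕ) % 2 = 0 then ((j : ℕ) + 2 * d - 1) % (2 * d) else ((j : ℕ) + 1) % (2 * d), by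
    have := j.isLt; split <;> exact Nat.mod_lt _ (by omega)⟩

/-- Cyclic adjacency of values. -/
def VA (k x y : ℕ) : Prop := x + 1 = y ∨ y + 1 = x ∨ (x = 0 ∧ y = k - 1) ∨ (x = k - 1 ∧ y = 0)

lemma VA.symm {k x y : ℕ} (h : VA k x y) : VA k y x := by unfold VA at *; omega

lemma piAdj_iff (k : ℕ) (π : Equiv.Perm (Fin k)) (p q : Fin k) :
    PiAdjacency k π p q ↔ VA k (π p) (π q) := by
  unfold PiAdjacency VA
  rw [Set.pair_eq_pair_iff]
  omega

lemma sim_refl (k : ℕ) (π : Equiv.Perm (Fin k)) (a : Fin k) : Sim k π a a := by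
  intro i h1 h2
  omega

lemma sim_symm {k : ℕ} {π : Equiv.Perm (Fin k)} {a b : Fin k} (h : Sim k π a b) :
    Sim k π b a := by
  intro i h1 h2
  exact h i (by omega) (by omega)

lemma sim_trans {k : ℕ} {π : Equiv.Perm (Fin k)} {a b c : Fin k} (h : Sim k π a b)
    (h' : Sim k π b c) : Sim k π a c := by
  intro i h1 h2
  by_cases hh : min ((π.symm a : ℕ)) ((π.symm b : ℕ)) ≤ i ∧
    i < max ((π.symm a : ℕ)) ((π.symm b : ℕ))
  · exact h i hh.1 hh.2
  · exact h' i (by omega) (by omega)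

lemma sim_consec_aux {k : ℕ} {π : Equiv.Perm (Fin k)} {x y : Fin k}
    (h : (π.symm x : ℕ) + 1 = π.symm y) (hv : VA k x y) : Sim k π x y := by
  intro i h1 h2
  have hi : i = (π.symm x : ℕ) := by omega
  subst hi
  refine ⟨by rw [h]; exact (π.symm y).isLt, ?_⟩
  rw [piAdj_iff]
  have e1 : (⟨(π.symm x : ℕ), (π.symm x).isLt⟩ : Fin k) = π.symm x := rfl
  have e2 : (⟨(π.symm x : ℕ) + 1, by rw [h]; exact (π.symm y).isLt⟩ : Fin k) = π.symm y :=
    Fin.ext h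
  rw [e2, e1]
  simpa using hv

lemma sim_consec {k : ℕ} {π : Equiv.Perm (Fin k)} {x y : Fin k}
    (h : (π.symm x : ℕ) + 1 = π.symm y ∨ (π.symm y : ℕ) + 1 = π.symm x) (hv : VA k x y) :
    Sim k π x y := by
  rcases h with h | h
  · exact sim_consec_aux h hv
  · exact sim_symm (sim_consec_aux h hv.symm)

lemma partner_partner (d : ℕ) (x : Fin (2 * d)) : partner d (partner d x) = x := by
  apply Fin.ext
  simp only [partner]
  split_ifs <;> omega

lemma partner_ne (d : ℕ) (x : Fin (2 * d)) : partner d x ≠ x := by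
  intro h
  have := congrArg Fin.val h
  simp only [partner] at this
  split_ifs at this <;> omega

lemma va_partner (d : ℕ) (x : Fin (2 * d)) : VA (2 * d) x (partner d x) := by
  simp only [partner, VA]
  split_ifs <;> omega

lemma va_prev (d : ℕ) (x : Fin (2 * d)) : VA (2 * d) x (prevVal d x) := by
  have hx := x.isLt
  simp only [prevVal, VA]
  split_ifs with h
  · rcases Nat.eq_zero_or_pos (x : ℕ) with h0 | h0
    · rw [h0, Nat.mod_eq_of_lt (by omega)]; omega
    · have : (x : ℕ) + 2 * d - 1 = ((x : ℕ) - 1) + 2 * d := by omega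
      rw [this, Nat.add_mod_right, Nat.mod_eq_of_lt (by omega)]; omega
  · rcases Nat.lt_or_ge ((x : ℕ) + 1) (2 * d) with h0 | h0
    · rw [Nat.mod_eq_of_lt h0]; omega
    · have : (x : ℕ) + 1 = 2 * d := by omega
      rw [this, Nat.mod_self]; omega

lemma notFree_iff (d : ℕ) (π : Equiv.Perm (Fin (2 * d))) (x : Fin (2 * d)) :
    ¬ IsFree d π x ↔ Sim (2 * d) π x (partner d x) := by
  constructor
  · intro h
    unfold IsFree at h
    push Not at h
    obtain ⟨y, hy, hne⟩ := h
    rcases hy with hy | hy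
    · exact absurd hy.symm hne
    · exact hy.2.1
  · intro h hf
    refine partner_ne d x (hf _ (Or.inr ⟨h, h, ?_⟩))
    rw [partner_partner]
    exact sim_symm h

lemma notFree_partner {d : ℕ} {π : Equiv.Perm (Fin (2 * d))} {x : Fin (2 * d)}
    (h : ¬ IsFree d π x) : ¬ IsFree d π (partner d x) := by
  rw [notFree_iff] at *
  rw [partner_partner]
  exact sim_symm h

lemma approx_iff (d : ℕ) (π : Equiv.Perm (Fin (2 * d))) (x y : Fin (2 * d)) :
    ApproxSim d π x y ↔ x = y ∨ (Sim (2 * d) π x y ∧ ¬ IsFree d π x ∧ ¬ IsFree d π y) := by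
  rw [notFree_iff, notFree_iff]; rfl

lemma approx_symm {d : ℕ} {π : Equiv.Perm (Fin (2 * d))} {x y : Fin (2 * d)}
    (h : ApproxSim d π x y) : ApproxSim d π y x := by
  rcases h with h | ⟨h1, h2, h3⟩
  · exact Or.inl h.symm
  · exact Or.inr ⟨sim_symm h1, h3, h2⟩

lemma approx_trans {d : ℕ} {π : Equiv.Perm (Fin (2 * d))} {x y z : Fin (2 * d)}
    (h : ApproxSim d π x y) (h' : ApproxSim d π y z) : ApproxSim d π x z := by
  rcases h with h | ⟨h1, h2, h3⟩
  · rw [h]; exact h'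
  · rcases h' with h' | ⟨h1', h2', h3'⟩
    · rw [← h']; exact Or.inr ⟨h1, h2, h3⟩
    · exact Or.inr ⟨sim_trans h1 h1', h2, h3'⟩

lemma mem_classOf {d : ℕ} {π : Equiv.Perm (Fin (2 * d))} {x y : Fin (2 * d)} :
    y ∈ classOf d π x ↔ ApproxSim d π x y := by
  simp [classOf]

lemma classOf_eq_iff {d : ℕ} {π : Equiv.Perm (Fin (2 * d))} {x y : Fin (2 * d)} :
    classOf d π x = classOf d π y ↔ ApproxSim d π x y := by
  constructor
  · intro h
    rw [← mem_classOf, h, mem_classOf]; exact Or.inl rfl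
  · intro h
    ext z
    rw [mem_classOf, mem_classOf]
    exact ⟨fun h' => approx_trans (approx_symm h) h', fun h' => approx_trans h h'⟩

lemma card_classOf (d : ℕ) (π : Equiv.Perm (Fin (2 * d))) (x : Fin (2 * d)) :
    1 < (classOf d π x).card ↔ ¬ IsFree d π x := by
  rw [Finset.one_lt_card_iff]
  constructor
  · rintro ⟨a, b, ha, hb, hab⟩ hf
    rw [mem_classOf] at ha hb
    exact hab ((hf a ha).trans (hf b hb).symm)
  · intro h
    refine ⟨x, partner d x, mem_classOf.2 (Or.inl rfl), ?_, (partner_ne d x).symm⟩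
    rw [mem_classOf, approx_iff]
    exact Or.inr ⟨(notFree_iff d π x).1 h, h, notFree_partner h⟩

open Classical in
lemma numBlocks_eq (d : ℕ) (π : Equiv.Perm (Fin (2 * d))) :
    numBlocks d π = ((Finset.univ.filter (fun x => ¬ IsFree d π x)).image (classOf d π)).card := by
  unfold numBlocks
  congr 1
  ext C
  simp only [Finset.mem_filter, Finset.mem_image, Finset.mem_univ, true_and]
  constructor
  · rintro ⟨⟨x, rfl⟩, h⟩
    exact ⟨x, (card_classOf d π x).1 h, rfl⟩
  · rintro ⟨x, h, rfl⟩
    exact ⟨⟨x, rfl⟩, (card_classOf d π x).2 h⟩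

lemma card_image_le_of_factor {α β γ : Type*} [DecidableEq β] [DecidableEq γ]
    (s : Finset α) (f : α → β) (g : α → γ)
    (h : ∀ x ∈ s, ∀ y ∈ s, f x = f y → g x = g y) : (s.image g).card ≤ (s.image f).card := by
  classical
  rcases s.eq_empty_or_nonempty with rfl | ⟨x0, hx0⟩
  · simp
  let G : β → γ := fun C => if hC : ∃ x ∈ s, f x = C then g hC.choose else g x0
  have : s.image g ⊆ (s.image f).image G := by
    intro c hc
    obtain ⟨x, hx, rfl⟩ := Finset.mem_image.1 hc
    refine Finset.mem_image.2 ⟨f x, Finset.mem_image_of_mem f hx, ?_⟩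
    have hC : ∃ x' ∈ s, f x' = f x := ⟨x, hx, rfl⟩
    simp only [G, dif_pos hC]
    exact h _ hC.choose_spec.1 _ hx hC.choose_spec.2
  exact (Finset.card_le_card this).trans Finset.card_image_le

open Classical in
lemma nu_drop (d : ℕ) (π τ : Equiv.Perm (Fin (2 * d)))
    (H : ∀ x y, ¬ IsFree d π x → ¬ IsFree d π y → Sim (2 * d) π x y → Sim (2 * d) τ x y)
    (a j : Fin (2 * d)) (ha : IsFree d π a) (hj : ¬ IsFree d π j)
    (h1 : Sim (2 * d) τ a (partner d a)) (h2 : Sim (2 * d) τ a j) :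
    3 ≤ nu d π - nu d τ := by
  have hnf : ∀ x, ¬ IsFree d π x → ¬ IsFree d τ x := fun x hx =>
    (notFree_iff d τ x).2 (H _ _ hx (notFree_partner hx) ((notFree_iff d π x).1 hx))
  have haτ : ¬ IsFree d τ a := (notFree_iff d τ a).2 h1
  -- newly nonfree even elements
  set E : Finset (Fin (2 * d)) :=
    Finset.univ.filter (fun x => IsFree d π x ∧ ¬ IsFree d τ x ∧ (x : ℕ) % 2 = 0) with hE
  have hfp : ∀ x, IsFree d π x → IsFree d π (partner d x) := by
    intro x hx
    by_contra h
    have := notFree_partner h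
    rw [partner_partner] at this
    exact this hx
  obtain ⟨e, heE, he⟩ : ∃ e ∈ E, Sim (2 * d) τ e j := by
    by_cases hp : (a : ℕ) % 2 = 0
    · exact ⟨a, by simp [hE, ha, haτ, hp], h2⟩
    · refine ⟨partner d a, ?_, sim_trans (sim_symm h1) h2⟩
      simp only [hE, Finset.mem_filter, Finset.mem_univ, true_and]
      refine ⟨hfp a ha, notFree_partner haτ, ?_⟩
      simp only [partner, if_neg hp]
      omega
  have hEmem : ∀ x, x ∈ E ↔ IsFree d π x ∧ ¬ IsFree d τ x ∧ (x : ℕ) % 2 = 0 := by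
    intro x; simp [hE]
  have hEpos : 1 ≤ E.card := Finset.card_pos.2 ⟨e, heE⟩
  -- singletons
  have hS : numSingletons d τ + 2 * E.card ≤ numSingletons d π := by
    set O := E.image (partner d) with hO
    have hOc : O.card = E.card := Finset.card_image_of_injective _
      (fun x y h => by rw [← partner_partner d x, h, partner_partner])
    have hpar : ∀ x : Fin (2 * d), (x : ℕ) % 2 = 0 → (partner d x : ℕ) % 2 = 1 := by
      intro x hx
      simp only [partner, if_pos hx]
      omega
    have hd1 : Disjoint E O := by
      rw [Finset.disjoint_left]
      intro x hx hx'
      obtain ⟨y, hy, rfl⟩ := Finset.mem_image.1 hx'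
      have := hpar y ((hEmem y).1 hy).2.2
      have := ((hEmem _).1 hx).2.2
      omega
    have hd2 : Disjoint (Finset.univ.filter (fun x => IsFree d τ x)) (E ∪ O) := by
      rw [Finset.disjoint_left]
      intro x hx hx'
      have hx := (Finset.mem_filter.1 hx).2
      rcases Finset.mem_union.1 hx' with h | h
      · exact ((hEmem x).1 h).2.1 hx
      · obtain ⟨y, hy, rfl⟩ := Finset.mem_image.1 h
        exact notFree_partner ((hEmem y).1 hy).2.1 hx
    have hsub : (Finset.univ.filter (fun x => IsFree d τ x)) ∪ (E ∪ O) ⊆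
        Finset.univ.filter (fun x => IsFree d π x) := by
      intro x hx
      simp only [Finset.mem_filter, Finset.mem_univ, true_and]
      rcases Finset.mem_union.1 hx with h | h
      · by_contra hc
        exact hnf x hc (Finset.mem_filter.1 h).2
      · rcases Finset.mem_union.1 h with h | h
        · exact ((hEmem x).1 h).1
        · obtain ⟨y, hy, rfl⟩ := Finset.mem_image.1 h
          exact hfp y ((hEmem y).1 hy).1
    have := Finset.card_le_card hsub
    rw [Finset.card_union_of_disjoint hd2, Finset.card_union_of_disjoint hd1, hOc] at this
    have e1 : numSingletons d τ = (Finset.univ.filter (fun x => IsFree d τ x)).card := by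
      unfold numSingletons; congr
    have e2 : numSingletons d π = (Finset.univ.filter (fun x => IsFree d π x)).card := by
      unfold numSingletons; congr
    omega
  have hB : numBlocks d τ ≤ numBlocks d π + (E.card - 1) := by
    rw [numBlocks_eq, numBlocks_eq]
    set N := Finset.univ.filter (fun x => ¬ IsFree d π x) with hN
    have hNm : ∀ x, x ∈ N ↔ ¬ IsFree d π x := by intro x; simp [hN]
    have hsub : (Finset.univ.filter (fun x => ¬ IsFree d τ x)).image (classOf d τ) ⊆
        N.image (classOf d τ) ∪ (E.erase e).image (classOf d τ) := by
      intro C hC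
      obtain ⟨x, hx, rfl⟩ := Finset.mem_image.1 hC
      have hx := (Finset.mem_filter.1 hx).2
      rw [Finset.mem_union]
      by_cases hxp : IsFree d π x
      · obtain ⟨y, hy, hxy⟩ : ∃ y ∈ E, classOf d τ x = classOf d τ y := by
          by_cases hp : (x : ℕ) % 2 = 0
          · exact ⟨x, (hEmem x).2 ⟨hxp, hx, hp⟩, rfl⟩
          · refine ⟨partner d x, (hEmem _).2 ⟨hfp x hxp, notFree_partner hx, ?_⟩, ?_⟩
            · simp only [partner, if_neg hp]
              omega
            · rw [classOf_eq_iff, approx_iff]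
              exact Or.inr ⟨(notFree_iff _ _ _).1 hx, hx, notFree_partner hx⟩
        rw [hxy]
        by_cases hye : y = e
        · left
          refine Finset.mem_image.2 ⟨j, (hNm j).2 hj, ?_⟩
          rw [classOf_eq_iff, approx_iff, hye]
          exact Or.inr ⟨sim_symm he, hnf j hj, ((hEmem e).1 heE).2.1⟩
        · right
          exact Finset.mem_image_of_mem _ (Finset.mem_erase.2 ⟨hye, hy⟩)
      · left
        exact Finset.mem_image_of_mem _ ((hNm x).2 hxp)
    refine (Finset.card_le_card hsub).trans ((Finset.card_union_le _ _).trans ?_)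
    refine Nat.add_le_add (card_image_le_of_factor _ _ _ ?_) ?_
    · intro x hx y hy hxy
      have hx := (hNm x).1 hx
      have hy := (hNm y).1 hy
      rw [classOf_eq_iff, approx_iff] at *
      rcases hxy with h | h
      · exact Or.inl h
      · exact Or.inr ⟨H x y hx hy h.1, hnf x hx, hnf y hy⟩
    · rw [← Finset.card_erase_of_mem heE]
      exact Finset.card_image_le
  have hB' : numBlocks d τ + 1 ≤ numBlocks d π + E.card := by omega
  have q1 : (numSingletons d τ : ℚ) + 2 * E.card ≤ numSingletons d π := by exact_mod_cast hS
  have q2 : (numBlocks d τ : ℚ) + 1 ≤ numBlocks d π + E.card := by exact_mod_cast hB'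
  have q3 : (1 : ℚ) ≤ E.card := by exact_mod_cast hEpos
  unfold nu
  linarith

lemma va_cases {d : ℕ} (hd : 2 ≤ d) {x y z : Fin (2 * d)} (h1 : VA (2 * d) x y)
    (h2 : VA (2 * d) x z) (hyz : y ≠ z) : y = partner d x ∨ z = partner d x := by
  have hyz' : (y : ℕ) ≠ z := fun h => hyz (Fin.ext h)
  have hx := x.isLt
  have hy := y.isLt
  have hz := z.isLt
  simp only [Fin.ext_iff, partner]
  unfold VA at *
  split_ifs <;> omega

lemma mid_notFree {d : ℕ} {π : Equiv.Perm (Fin (2 * d))} {x y z : Fin (2 * d)}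
    (hx : ¬ IsFree d π x) (hy : ¬ IsFree d π y) (h : Sim (2 * d) π x y)
    (h1 : (π.symm x : ℕ) ≤ π.symm z) (h2 : (π.symm z : ℕ) ≤ π.symm y) : ¬ IsFree d π z := by
  rcases Nat.eq_or_lt_of_le h1 with e | h1
  · rwa [← π.symm.injective (Fin.ext e)]
  rcases Nat.eq_or_lt_of_le h2 with e | h2
  · rwa [π.symm.injective (Fin.ext e)]
  have hyl := (π.symm y).isLt
  obtain ⟨i, hi⟩ : ∃ i, (π.symm z : ℕ) = i + 1 := ⟨π.symm z - 1, by omega⟩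
  obtain ⟨l1, a1⟩ := h i (by omega) (by omega)
  obtain ⟨l2, a2⟩ := h (i + 1) (by omega) (by omega)
  rw [piAdj_iff] at a1 a2
  have ez : π ⟨i + 1, l1⟩ = z := by
    have : (⟨i + 1, l1⟩ : Fin (2 * d)) = π.symm z := Fin.ext hi.symm
    rw [this]; simp
  rw [ez] at a1 a2
  have hne : π ⟨i, by omega⟩ ≠ π ⟨i + 1 + 1, l2⟩ := by
    intro h
    have := congrArg Fin.val (π.injective h)
    simp at this
    omega
  rw [notFree_iff]
  rcases va_cases (by omega) a1.symm a2 hne with h' | h' <;> rw [← h'] <;> apply sim_consec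
  · right; simp [hi]
  · exact a1.symm
  · left; simp [hi]
  · exact a2

lemma keep_sim {d : ℕ} {π τ : Equiv.Perm (Fin (2 * d))}
    (hc : ∀ x y, ¬ IsFree d π x → ¬ IsFree d π y → (π.symm x : ℕ) + 1 = π.symm y →
      (τ.symm x : ℕ) + 1 = τ.symm y ∨ (τ.symm y : ℕ) + 1 = τ.symm x)
    (x y : Fin (2 * d)) (hx : ¬ IsFree d π x) (hy : ¬ IsFree d π y) (h : Sim (2 * d) π x y) :
    Sim (2 * d) τ x y := by
  wlog hle : (π.symm x : ℕ) ≤ π.symm y generalizing x y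
  · exact sim_symm (this y x hy hx (sim_symm h) (by omega))
  have key : ∀ n : ℕ, ∀ z : Fin (2 * d), (π.symm z : ℕ) = π.symm x + n →
      (π.symm z : ℕ) ≤ π.symm y → Sim (2 * d) τ x z := by
    intro n
    induction n with
    | zero =>
      intro z hz _
      rw [π.symm.injective (Fin.ext hz)]
      exact sim_refl _ _ _
    | succ n ih =>
      intro z hz hzy
      have hzl := (π.symm z).isLt
      obtain ⟨l, a⟩ := h (π.symm x + n) (by omega) (by omega)
      rw [piAdj_iff] at a
      have ez : π ⟨(π.symm x : ℕ) + n + 1, l⟩ = z := by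
        have : (⟨(π.symm x : ℕ) + n + 1, l⟩ : Fin (2 * d)) = π.symm z := Fin.ext (by simp; omega)
        rw [this]; simp
      rw [ez] at a
      set w := π ⟨(π.symm x : ℕ) + n, by omega⟩ with hw
      have hwp : (π.symm w : ℕ) = π.symm x + n := by simp [hw]
      refine sim_trans (ih w hwp (by omega)) (sim_consec (hc w z ?_ ?_ (by omega)) a)
      · exact mid_notFree hx hy h (by omega) (by omega)
      · exact mid_notFree hx hy h (by omega) (by omega)
  exact key (π.symm y - π.symm x) y (by omega) le_rfl

/-- Reversal of positions below `t`. -/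
def rv (t i : ℕ) : ℕ := if i < t then t - 1 - i else i

/-- Prefix reversal as a permutation. -/
def rvP (k t : ℕ) (ht : t ≤ k) : Equiv.Perm (Fin k) :=
  Function.Involutive.toPerm
    (fun i => ⟨rv t i, by have := i.isLt; unfold rv; split_ifs <;> omega⟩)
    (by
      intro i
      apply Fin.ext
      simp only [rv]
      split_ifs <;> omega)

lemma rvP_val (k t : ℕ) (ht : t ≤ k) (i : Fin k) : (rvP k t ht i : ℕ) = rv t i := rfl

lemma rvP_inv (k t : ℕ) (ht : t ≤ k) : (rvP k t ht)⁻¹ = rvP k t ht := rfl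

lemma walk_one (k t : ℕ) (ht : t ≤ k) (π : Equiv.Perm (Fin k)) :
    ∃ w : (pancakeGraph k).Walk π (π * rvP k t ht), w.length ≤ 1 := by
  by_cases h : π = π * rvP k t ht
  · rw [← h]
    exact ⟨SimpleGraph.Walk.nil, by simp⟩
  · have hadj : (pancakeGraph k).Adj π (π * rvP k t ht) := by
      rw [pancakeGraph, SimpleGraph.fromRel_adj]
      refine ⟨h, Or.inl ⟨t, ht, ?_, ?_⟩⟩
      · intro i hi
        rw [Equiv.Perm.mul_apply]
        congr 1
        apply Fin.ext
        rw [rvP_val, rv, if_neg (by omega)]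
      · intro i hi
        rw [Equiv.Perm.mul_apply]
        congr 1
        apply Fin.ext
        rw [rvP_val, rv]
        simp only
        rw [if_pos (by omega)]
        omega
    exact ⟨hadj.toWalk, by simp⟩

lemma dist_three (k : ℕ) (π : Equiv.Perm (Fin k)) (t1 t2 t3 : ℕ) (h1 : t1 ≤ k) (h2 : t2 ≤ k)
    (h3 : t3 ≤ k) :
    (pancakeGraph k).dist π (π * rvP k t1 h1 * rvP k t2 h2 * rvP k t3 h3) ≤ 3 := by
  obtain ⟨w1, l1⟩ := walk_one k t1 h1 π
  obtain ⟨w2, l2⟩ := walk_one k t2 h2 (π * rvP k t1 h1)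
  obtain ⟨w3, l3⟩ := walk_one k t3 h3 (π * rvP k t1 h1 * rvP k t2 h2)
  refine (SimpleGraph.dist_le ((w1.append w2).append w3)).trans ?_
  rw [SimpleGraph.Walk.length_append, SimpleGraph.Walk.length_append]
  omega

lemma three_symm (k : ℕ) (π : Equiv.Perm (Fin k)) (t1 t2 t3 : ℕ) (h1 : t1 ≤ k) (h2 : t2 ≤ k)
    (h3 : t3 ≤ k) (x : Fin k) :
    ((π * rvP k t1 h1 * rvP k t2 h2 * rvP k t3 h3).symm x : ℕ) =
      rv t3 (rv t2 (rv t1 (π.symm x))) := rfl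

lemma finish (d : ℕ) (π : Equiv.Perm (Fin (2 * d))) (a j : Fin (2 * d))
    (ha : IsFree d π a) (hj : ¬ IsFree d π j) (hv : VA (2 * d) j a)
    (t1 t2 t3 : ℕ) (h1 : t1 ≤ 2 * d) (h2 : t2 ≤ 2 * d) (h3 : t3 ≤ 2 * d)
    (hc : ∀ i : ℕ, i ≠ π.symm a → i + 1 ≠ π.symm a → i ≠ π.symm (partner d a) →
      i + 1 ≠ π.symm (partner d a) →
      rv t3 (rv t2 (rv t1 i)) + 1 = rv t3 (rv t2 (rv t1 (i + 1))) ∨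
      rv t3 (rv t2 (rv t1 (i + 1))) + 1 = rv t3 (rv t2 (rv t1 i)))
    (hab : rv t3 (rv t2 (rv t1 (π.symm a))) + 1 = rv t3 (rv t2 (rv t1 (π.symm (partner d a)))))
    (hja : rv t3 (rv t2 (rv t1 (π.symm j))) + 1 = rv t3 (rv t2 (rv t1 (π.symm a)))) :
    ∃ τ : Equiv.Perm (Fin (2 * d)),
      (pancakeGraph (2 * d)).dist π τ ≤ 3 ∧ 3 ≤ nu d π - nu d τ := by
  refine ⟨_, dist_three (2 * d) π t1 t2 t3 h1 h2 h3, nu_drop d π _ (keep_sim ?_) a j ha hj ?_ ?_⟩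
  · intro x y hx hy hxy
    have hne : ∀ x y : Fin (2 * d), ¬ IsFree d π x → IsFree d π y →
        (π.symm x : ℕ) ≠ π.symm y := by
      intro x y hx hy h
      rw [π.symm.injective (Fin.ext h)] at hx
      exact hx hy
    have hb : IsFree d π (partner d a) := by
      by_contra h
      have := notFree_partner h
      rw [partner_partner] at this
      exact this ha
    rw [three_symm, three_symm, ← hxy]
    refine hc _ (hne x a hx ha) ?_ (hne x _ hx hb) ?_
    · rw [hxy]; exact hne y a hy ha
    · rw [hxy]; exact hne y _ hy hb
  · exact sim_consec (Or.inl (by rw [three_symm, three_symm]; exact hab)) (va_partner d a)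
  · exact sim_consec (Or.inr (by rw [three_symm, three_symm]; exact hja)) hv.symm

/-- Let `k = 2d`, `d ≥ 1`, and `π ∈ S_k` with `ν(π) > 2`. Let
`j = π(1)` and `j'` the unique element of `[k]` congruent to `j - o_j` mod `k`. If `j`
is not free but `j'` is free, then there is `τ` with `d_{P_k}(π, τ) ≤ 3` and
`ν(π) - ν(τ) ≥ 3`. -/
theorem statement_12 (d : ℕ) (hd : 1 ≤ d) (π : Equiv.Perm (Fin (2 * d)))
    (hν : 2 < nu d π)
    (hj : ¬ IsFree d π (π ⟨0, by omega⟩))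
    (hj' : IsFree d π (prevVal d (π ⟨0, by omega⟩))) :
    ∃ τ : Equiv.Perm (Fin (2 * d)),
      (pancakeGraph (2 * d)).dist π τ ≤ 3 ∧ 3 ≤ nu d π - nu d τ := by
  set j := π ⟨0, by omega⟩ with hjdef
  set a := prevVal d j with ha
  have hj0 : (π.symm j : ℕ) = 0 := by simp [hjdef]
  have hb : IsFree d π (partner d a) := by
    by_contra h
    have := notFree_partner h
    rw [partner_partner] at this
    exact this hj'
  have hpos : ∀ y, IsFree d π y → 0 < (π.symm y : ℕ) := by
    intro y hy
    rw [Nat.pos_iff_ne_zero]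
    intro h
    rw [← hj0] at h
    rw [π.symm.injective (Fin.ext h)] at hy
    exact hj hy
  have hp := hpos a hj'
  have hq := hpos _ hb
  have hpl := (π.symm a).isLt
  have hql := (π.symm (partner d a)).isLt
  have hpq : (π.symm a : ℕ) ≠ π.symm (partner d a) := by
    intro h
    exact partner_ne d a (π.symm.injective (Fin.ext h)).symm
  have hv := va_prev d j
  rcases Nat.lt_or_gt_of_ne hpq with hlt | hlt
  · refine finish d π a j hj' hj hv (π.symm a) (π.symm a + 1) (π.symm (partner d a))
      (by omega) (by omega) (by omega) ?_ ?_ ?_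
    · intro i e1 e2 e3 e4
      simp only [rv]
      split_ifs <;> omega
    · simp only [rv]
      split_ifs <;> omega
    · rw [hj0]
      simp only [rv]
      split_ifs <;> omega
  · refine finish d π a j hj' hj hv (π.symm a) (π.symm a + 1) (π.symm (partner d a) + 1)
      (by omega) (by omega) (by omega) ?_ ?_ ?_
    · intro i e1 e2 e3 e4
      simp only [rv]
      split_ifs <;> omega
    · simp only [rv]
      split_ifs <;> omega
    · rw [hj0]
      simp only [rv]
      split_ifs <;> omega
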